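/- Let Z ⊆ Σ₂ be a nonempty compact σ-invariant set, z ∈ Z with dense σ-orbit in Z, and suppose φ ∈ ℓ∞(ℤ₂×ℤ) and δ > 0 satisfy φ(z_i, i) ≥ φ(1−z_i, i) + δ for all i ∈ ℤ. Then for every ergodic σ-invariant measure μ, Λ(φ, μ) ≤ log ϱ(L₀^φ, L₁^φ) − δ · inf{ d̄(μ, ν) : ν ∈ M_σ, ν(Z) = 1 }. -/

import Mathlib

open MeasureTheory Filter

noncomputable section

/-- The full two-sided shift space on two symbols. -/
abbrev Sig := ℤ → Bool

/-- The two-sided shift map. -/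
def shift : Sig → Sig := fun x i => x (i + 1)

/-- `birk φ n x = sup_{k ∈ ℤ} Σ_{i=0}^{n-1} φ(x_i, i+k)`, which equals
`log ‖L^φ_{x_{n-1}} ⋯ L^φ_{x_0}‖` for the associated weighted shift operators. -/
def birk (φ : Bool → ℤ → ℝ) (n : ℕ) (x : Sig) : ℝ :=
  ⨆ k : ℤ, ∑ i ∈ Finset.range n, φ (x (i : ℤ)) ((i : ℤ) + k)

/-- The top Lyapunov exponent `Λ(φ,μ) = inf_{n ≥ 1} (1/n) ∫ birk φ n dμ`
(the limit exists and equals this infimum by subadditivity). -/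
def Lam (φ : Bool → ℤ → ℝ) (μ : Measure Sig) : ℝ :=
  ⨅ n : ℕ, ((n : ℝ) + 1)⁻¹ * ∫ x, birk φ (n + 1) x ∂μ

/-- `log ϱ(L₀^φ, L₁^φ) = inf_{n ≥ 1} (1/n) sup_{x} birk φ n x`. -/
def logSpr (φ : Bool → ℤ → ℝ) : ℝ :=
  ⨅ n : ℕ, ((n : ℝ) + 1)⁻¹ * ⨆ x : Sig, birk φ (n + 1) x

/-- The Ornstein `d̄`-metric: `d̄(μ,ν)` is the infimum over `(σ×σ)`-invariant joinings `m`
of `μ` and `ν` of `m {(x,y) : x₀ ≠ y₀}`. -/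
def dbar (μ ν : Measure Sig) : ℝ :=
  sInf {r : ℝ | ∃ m : Measure (Sig × Sig),
    IsProbabilityMeasure m ∧ m.map (Prod.map shift shift) = m ∧
    m.map Prod.fst = μ ∧ m.map Prod.snd = ν ∧
    r = (m {p : Sig × Sig | p.1 0 ≠ p.2 0}).toReal}

/-!
For each `x` and `n` pick a power `σᵏ z` whose first `n` symbols are as close as possible to those
of `x` in Hamming distance. In each window of `n` consecutive integers, replacing the symbols of
`x` by those of `z` gains at least `δ` at every mismatch, so `birk φ n x` is at most
`sup birk φ n` minus `δ` times that minimal distance. The normalised distance is, on average over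
`x`, the mass that the law of `(x, σᵏ z)`, averaged over `n` steps of `σ × σ`, gives to
`{x₀ ≠ y₀}`. A weak limit of these averages is a joining of `μ` with an invariant measure carried
by `Z`. Since `{x₀ ≠ y₀}` is clopen, its mass passes to the limit, and by Fekete's lemma
`sup birk φ n / n` tends to `logSpr φ`.
-/

section OrbitAverage

open Function
open scoped ENNReal Topology BoundedContinuousFunction

variable {α β : Type*} [MeasurableSpace α] [MeasurableSpace β] {T : α → α} {μ : Measure α} {n : ℕ}

/-- The Cesàro average `n⁻¹ (μ + T_* μ + ⋯ + T_*ⁿ⁻¹ μ)` of a measure along the orbit of `T`, from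
which invariant measures are obtained as weak limits. For `n = 0` it is the zero measure. -/
def orbitAverage (T : α → α) (n : ℕ) (μ : Measure α) : Measure α :=
  (n : ℝ≥0∞)⁻¹ • ∑ i ∈ Finset.range n, μ.map T^[i]

instance [IsFiniteMeasure μ] : IsFiniteMeasure (orbitAverage T n μ) := by
  rcases eq_or_ne n 0 with rfl | hn
  · simpa [orbitAverage] using inferInstanceAs (IsFiniteMeasure (0 : Measure α))
  · exact Measure.smul_finite _ (by simpa)

lemma isProbabilityMeasure_orbitAverage [IsProbabilityMeasure μ] (hT : Measurable T)
    (hn : n ≠ 0) : IsProbabilityMeasure (orbitAverage T n μ) where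
  measure_univ := by
    simp [orbitAverage, Measure.map_apply (hT.iterate _), ENNReal.inv_mul_cancel, hn]

lemma orbitAverage_eq_self (hμ : MeasurePreserving T μ μ) (hn : n ≠ 0) :
    orbitAverage T n μ = μ := by
  simp [orbitAverage, (hμ.iterate _).map_eq, ← Nat.cast_smul_eq_nsmul ℝ≥0∞, smul_smul,
    ENNReal.inv_mul_cancel, hn]

lemma map_orbitAverage {S : β → β} {π : α → β} (hT : Measurable T) (hS : Measurable S)
    (hπ : Measurable π) (h : Semiconj π T S) :
    (orbitAverage T n μ).map π = orbitAverage S n (μ.map π) := by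
  simp only [orbitAverage, Measure.map_smul, Measure.map_finset_sum hπ.aemeasurable,
    Measure.map_map hπ (hT.iterate _), Measure.map_map (hS.iterate _) hπ,
    (h.iterate_right _).comp_eq]

lemma ae_mem_orbitAverage {A : Set α} (hT : Measurable T) (hA : MeasurableSet A)
    (h : ∀ i, ∀ᵐ x ∂μ, T^[i] x ∈ A) : ∀ᵐ x ∂orbitAverage T n μ, x ∈ A := by
  refine Measure.ae_smul_measure (ae_finsetSum_measure_iff.2 fun i _ => ?_) _
  exact (ae_map_iff (hT.iterate i).aemeasurable hA).2 (h i)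

lemma integral_orbitAverage {E : Type*} [NormedAddCommGroup E] [NormedSpace ℝ E] {f : α → E}
    (hT : Measurable T) (hf : ∀ i, Integrable f (μ.map T^[i])) :
    ∫ x, f x ∂orbitAverage T n μ = ∫ x, birkhoffAverage ℝ T f n x ∂μ := by
  have hcomp (i : ℕ) : Integrable (fun x => f (T^[i] x)) μ :=
    (hf i).comp_measurable (hT.iterate i)
  simp only [orbitAverage, integral_smul_measure, birkhoffAverage, birkhoffSum, integral_smul,
    integral_finsetSum_measure fun i _ => hf i, integral_finsetSum _ fun i _ => hcomp i,
    integral_map (hT.iterate _).aemeasurable (hf _).aestronglyMeasurable]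
  simp

lemma measureReal_orbitAverage [IsFiniteMeasure μ] {A : Set α} (hT : Measurable T)
    (hA : MeasurableSet A) :
    (orbitAverage T n μ).real A = ∫ x, birkhoffAverage ℝ T (A.indicator 1) n x ∂μ := by
  rw [← integral_orbitAverage hT fun i => (integrable_const 1).indicator hA,
    integral_indicator_one hA]

lemma norm_integral_comp_sub_integral_orbitAverage_le [IsProbabilityMeasure μ]
    {E : Type*} [NormedAddCommGroup E] [NormedSpace ℝ E] {f : α → E} {C : ℝ}
    (hT : Measurable T) (hf : StronglyMeasurable f) (hC : ∀ x, ‖f x‖ ≤ C) :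
    ‖∫ x, f (T x) ∂orbitAverage T n μ - ∫ x, f x ∂orbitAverage T n μ‖ ≤ (n : ℝ)⁻¹ * (2 * C) := by
  have hint (ν : Measure α) [IsFiniteMeasure ν] : Integrable f ν :=
    .of_bound hf.aestronglyMeasurable C (.of_forall hC)
  have hintT (ν : Measure α) [IsFiniteMeasure ν] : Integrable (f ∘ T) ν :=
    (hint (ν.map T)).comp_measurable hT
  have htelescope (x : α) :
      birkhoffAverage ℝ T (f ∘ T - f) n x = (n : ℝ)⁻¹ • (f (T^[n] x) - f x) := by
    rw [birkhoffAverage_sub, ← birkhoffAverage_apply_sub_birkhoffAverage]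
    simp only [birkhoffAverage, birkhoffSum, Pi.sub_apply, comp_apply, ← iterate_succ_apply,
      ← iterate_succ_apply']
  have hdiff : ∫ x, f (T x) ∂orbitAverage T n μ - ∫ x, f x ∂orbitAverage T n μ =
      ∫ x, birkhoffAverage ℝ T (f ∘ T - f) n x ∂μ := by
    rw [← integral_orbitAverage hT fun i => (hintT _).sub (hint _)]
    exact (integral_sub (hintT _) (hint _)).symm
  have hbound (x : α) : ‖birkhoffAverage ℝ T (f ∘ T - f) n x‖ ≤ (n : ℝ)⁻¹ * (2 * C) := by
    rw [htelescope, norm_smul, norm_inv, Real.norm_natCast]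
    gcongr
    exact (norm_sub_le _ _).trans (by linarith [hC (T^[n] x), hC x])
  rw [hdiff]
  simpa using norm_integral_le_of_norm_le_const (μ := μ) (.of_forall hbound)

lemma measurePreserving_of_tendsto_orbitAverage {X ι : Type*} [TopologicalSpace X]
    [MeasurableSpace X] [BorelSpace X] [HasOuterApproxClosed X] {l : Filter ι} [l.NeBot] {T : X → X}
    (hT : Continuous T) {N : ι → ℕ} (hN : Tendsto N l atTop) {μ : ι → Measure X}
    [∀ i, IsProbabilityMeasure (μ i)] {M : ι → ProbabilityMeasure X}
    (hM : ∀ i, (M i : Measure X) = orbitAverage T (N i) (μ i)) {m : ProbabilityMeasure X}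
    (hm : Tendsto M l (𝓝 m)) : MeasurePreserving T (m : Measure X) m := by
  refine ⟨hT.measurable, ?_⟩
  have := Measure.isProbabilityMeasure_map (μ := (m : Measure X)) hT.aemeasurable
  refine ext_of_forall_integral_eq_of_IsFiniteMeasure fun f => ?_
  rw [integral_map hT.aemeasurable f.continuous.aestronglyMeasurable]
  have hlim (g : X →ᵇ ℝ) := ProbabilityMeasure.tendsto_iff_forall_integral_tendsto.1 hm g
  have hzero : Tendsto (fun i => (N i : ℝ)⁻¹ * (2 * ‖f‖)) l (𝓝 0) := by
    simpa using (tendsto_inv_atTop_nhds_zero_nat.comp hN).mul_const (2 * ‖f‖)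
  refine sub_eq_zero.1 (tendsto_nhds_unique
    ((hlim (f.compContinuous ⟨T, hT⟩)).sub (hlim f)) (squeeze_zero_norm (fun i => ?_) hzero))
  rw [hM]
  exact norm_integral_comp_sub_integral_orbitAverage_le hT.measurable
    f.continuous.measurable.stronglyMeasurable f.norm_coe_le_norm

end OrbitAverage

section WeakLimits

open scoped Topology

variable {X Y ι : Type*} [TopologicalSpace X] [MeasurableSpace X] [OpensMeasurableSpace X]
  {l : Filter ι} {M : ι → ProbabilityMeasure X} {m : ProbabilityMeasure X}

lemma map_eq_of_tendsto [l.NeBot] [TopologicalSpace Y] [MeasurableSpace Y] [BorelSpace Y]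
    [HasOuterApproxClosed Y] {f : X → Y} {ν : Measure Y} (hf : Continuous f)
    (hm : Tendsto M l (𝓝 m)) (hM : ∀ i, (M i : Measure X).map f = ν) :
    (m : Measure X).map f = ν := by
  obtain ⟨i⟩ := l.nonempty_of_neBot
  have hconst (j : ι) : (M j).map hf.aemeasurable = (M i).map hf.aemeasurable :=
    Subtype.ext ((hM j).trans (hM i).symm)
  have hlim := ((ProbabilityMeasure.continuous_map hf).tendsto m).comp hm
  have hmap : m.map hf.aemeasurable = (M i).map hf.aemeasurable :=
    tendsto_nhds_unique (hlim.congr hconst) tendsto_const_nhds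
  exact (congrArg (fun p : ProbabilityMeasure Y => (p : Measure Y)) hmap).trans (hM i)

lemma ae_mem_of_tendsto [HasOuterApproxClosed X] [l.NeBot] {F : Set X} (hF : IsClosed F)
    (hm : Tendsto M l (𝓝 m)) (hM : ∀ i, ∀ᵐ x ∂(M i : Measure X), x ∈ F) :
    ∀ᵐ x ∂(m : Measure X), x ∈ F := by
  have hone (i : ι) : (M i : Measure X) F = 1 :=
    (mem_ae_iff_prob_eq_one hF.measurableSet).1 (hM i)
  refine (mem_ae_iff_prob_eq_one hF.measurableSet).2 (le_antisymm prob_le_one ?_)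
  simpa [hone] using ProbabilityMeasure.limsup_measure_closed_le_of_tendsto hm hF

lemma tendsto_measureReal_of_isClopen [HasOuterApproxClosed X] {A : Set X}
    (hA : IsClopen A) (hm : Tendsto M l (𝓝 m)) :
    Tendsto (fun i => (M i : Measure X).real A) l (𝓝 ((m : Measure X).real A)) :=
  (ENNReal.tendsto_toReal (measure_ne_top _ _)).comp
    (ProbabilityMeasure.tendsto_measure_of_null_frontier_of_tendsto' hm
      (by simp [hA.frontier_eq]))

end WeakLimits

lemma subadditive_lim_eq_iInf {u : ℕ → ℝ} (hu : Subadditive u) :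
    hu.lim = ⨅ n : ℕ, ((n : ℝ) + 1)⁻¹ * u (n + 1) := by
  have hIci : Set.Ici 1 = Set.range Nat.succ := Nat.range_succ.symm
  rw [Subadditive.lim, hIci, ← Set.range_comp, sInf_range]
  simp [Function.comp_def, div_eq_inv_mul]

lemma abs_div_natCast_le {a C : ℝ} {n : ℕ} (hC : 0 ≤ C) (h : |a| ≤ n * C) : |a / n| ≤ C := by
  rw [abs_div, Nat.abs_cast]
  exact div_le_of_le_mul₀ n.cast_nonneg hC (by rwa [mul_comm])

section Birk

open scoped Topology

variable {φ : Bool → ℤ → ℝ} {C : ℝ}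

/-- The power `σᵏ` of the shift for an integer `k`, so that two-sided orbits can be described
without the inverse of `shift`. -/
def shiftZPow (k : ℤ) (x : Sig) : Sig := fun j => x (j + k)

lemma shiftZPow_shiftZPow (k l : ℤ) (x : Sig) :
    shiftZPow k (shiftZPow l x) = shiftZPow (k + l) x :=
  funext fun j => congrArg x (add_assoc j k l)

lemma shift_iterate (n : ℕ) : shift^[n] = shiftZPow n := by
  induction n with
  | zero => exact funext fun x => funext fun j => congrArg x (add_zero j).symm
  | succ n ih =>
    rw [Function.iterate_succ', ih]
    exact funext fun x => (shiftZPow_shiftZPow 1 n x).trans (by rw [add_comm]; push_cast; rfl)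

lemma abs_sum_range_le (hC : ∀ a i, |φ a i| ≤ C) (n : ℕ) (x : Sig) (k : ℤ) :
    |∑ i ∈ Finset.range n, φ (x i) (i + k)| ≤ n * C := by
  simpa using (Finset.abs_sum_le_sum_abs _ _).trans
    (Finset.sum_le_card_nsmul (Finset.range n) _ C fun i _ => hC (x i) (i + k))

lemma sum_range_le_birk (hC : ∀ a i, |φ a i| ≤ C) (n : ℕ) (x : Sig) (k : ℤ) :
    ∑ i ∈ Finset.range n, φ (x i) (i + k) ≤ birk φ n x :=
  le_ciSup (f := fun k : ℤ => ∑ i ∈ Finset.range n, φ (x i) (i + k))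
    ⟨n * C, Set.forall_mem_range.2 fun k => (abs_le.1 (abs_sum_range_le hC n x k)).2⟩ k

lemma abs_birk_le (hC : ∀ a i, |φ a i| ≤ C) (n : ℕ) (x : Sig) : |birk φ n x| ≤ n * C :=
  abs_le.2 ⟨(abs_le.1 (abs_sum_range_le hC n x 0)).1.trans (sum_range_le_birk hC n x 0),
    ciSup_le fun k => (abs_le.1 (abs_sum_range_le hC n x k)).2⟩

lemma birk_le_iSup_birk (hC : ∀ a i, |φ a i| ≤ C) (n : ℕ) (x : Sig) :
    birk φ n x ≤ ⨆ y : Sig, birk φ n y :=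
  le_ciSup (f := birk φ n)
    ⟨n * C, Set.forall_mem_range.2 fun y => (abs_le.1 (abs_birk_le hC n y)).2⟩ x

lemma abs_iSup_birk_le (hC : ∀ a i, |φ a i| ≤ C) (n : ℕ) : |⨆ x : Sig, birk φ n x| ≤ n * C :=
  abs_le.2 ⟨(abs_le.1 (abs_birk_le hC n default)).1.trans (birk_le_iSup_birk hC n default),
    ciSup_le fun x => (abs_le.1 (abs_birk_le hC n x)).2⟩

lemma birk_add_le (hC : ∀ a i, |φ a i| ≤ C) (m n : ℕ) (x : Sig) :
    birk φ (m + n) x ≤ birk φ m x + birk φ n (shiftZPow m x) := by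
  refine ciSup_le fun k => ?_
  have htail : ∑ i ∈ Finset.range n, φ (x ((m + i : ℕ) : ℤ)) ((m + i : ℕ) + k) =
      ∑ i ∈ Finset.range n, φ (shiftZPow m x i) (i + (m + k)) :=
    Finset.sum_congr rfl fun i _ => by
      simp only [shiftZPow, Nat.cast_add, add_comm (m : ℤ), add_assoc]
  rw [Finset.sum_range_add, htail]
  exact add_le_add (sum_range_le_birk hC m x k) (sum_range_le_birk hC n _ _)

lemma subadditive_iSup_birk (hC : ∀ a i, |φ a i| ≤ C) :
    Subadditive fun n => ⨆ x : Sig, birk φ n x := fun m n =>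
  ciSup_le fun x => (birk_add_le hC m n x).trans
    (add_le_add (birk_le_iSup_birk hC m x) (birk_le_iSup_birk hC n _))

lemma tendsto_iSup_birk_div (hC : ∀ a i, |φ a i| ≤ C) :
    Tendsto (fun n : ℕ => (⨆ x : Sig, birk φ n x) / n) atTop (𝓝 (logSpr φ)) := by
  have hC₀ : 0 ≤ C := (abs_nonneg _).trans (hC true 0)
  have hsub := subadditive_iSup_birk hC
  rw [logSpr, ← subadditive_lim_eq_iInf hsub]
  exact hsub.tendsto_lim ⟨-C, Set.forall_mem_range.2 fun n =>
    (abs_le.1 (abs_div_natCast_le hC₀ (abs_iSup_birk_le hC n))).1⟩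

lemma measurable_birk (φ : Bool → ℤ → ℝ) (n : ℕ) : Measurable (birk φ n) :=
  .iSup fun k => Finset.measurable_sum _ fun i _ =>
    (Measurable.of_discrete (f := fun b : Bool => φ b (i + k))).comp (measurable_pi_apply _)

lemma integrable_birk (hC : ∀ a i, |φ a i| ≤ C) (n : ℕ) (μ : Measure Sig) [IsFiniteMeasure μ] :
    Integrable (birk φ n) μ :=
  .of_bound (measurable_birk φ n).aestronglyMeasurable (n * C) (.of_forall (abs_birk_le hC n))

lemma Lam_le_integral_birk_div (hC : ∀ a i, |φ a i| ≤ C) (μ : Measure Sig)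
    [IsProbabilityMeasure μ] (n : ℕ) :
    Lam φ μ ≤ (∫ x, birk φ (n + 1) x ∂μ) / (n + 1 : ℕ) := by
  have hC₀ : 0 ≤ C := (abs_nonneg _).trans (hC true 0)
  have habs (k : ℕ) : |∫ x, birk φ k x ∂μ| ≤ k * C := by
    simpa using norm_integral_le_of_norm_le_const (μ := μ)
      (.of_forall fun x => (Real.norm_eq_abs _).trans_le (abs_birk_le hC k x))
  have hLam : Lam φ μ = ⨅ k : ℕ, (∫ x, birk φ (k + 1) x ∂μ) / (k + 1 : ℕ) := by
    simp [Lam, div_eq_inv_mul]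
  exact hLam.trans_le (ciInf_le ⟨-C, Set.forall_mem_range.2 fun k =>
    (abs_le.1 (abs_div_natCast_le hC₀ (habs (k + 1)))).1⟩ n)

end Birk

section NearestPower

variable {φ : Bool → ℤ → ℝ} {C δ : ℝ} {z : Sig} {n : ℕ}

/-- The word `x₀ ⋯ xₙ₋₁`, indexed by `Fin n` so that words can be compared by `hammingDist`. -/
def initialWord (n : ℕ) (x : Sig) : Fin n → Bool := fun i => x (i : ℕ)

/-- A power `k` for which `σᵏ z` begins with a word at minimal Hamming distance from `w`. -/
def nearestPower (z : Sig) (w : Fin n → Bool) : ℤ :=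
  Function.argmin fun k => hammingDist w (initialWord n (shiftZPow k z))

lemma measurable_initialWord (n : ℕ) : Measurable (initialWord n) :=
  measurable_pi_lambda _ fun _ => measurable_pi_apply _

lemma measurable_hammingDist_initialWord (n : ℕ) : Measurable fun p : Sig × Sig =>
    (hammingDist (initialWord n p.1) (initialWord n p.2) : ℝ) := by
  have hdist : Measurable fun w : (Fin n → Bool) × (Fin n → Bool) => hammingDist w.1 w.2 :=
    .of_discrete
  have hword := (measurable_initialWord n).prodMap (measurable_initialWord n)
  exact measurable_from_nat.comp (hdist.comp hword)

lemma hammingDist_initialWord (n : ℕ) (x y : Sig) :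
    hammingDist (initialWord n x) (initialWord n y) =
      ∑ i ∈ Finset.range n, if x i ≠ y i then 1 else 0 := by
  rw [hammingDist, Finset.card_filter]
  exact Fin.sum_univ_eq_sum_range (fun i => if x i ≠ y i then 1 else 0) n

lemma sum_range_le_sum_shiftZPow_sub (hgap : ∀ i : ℤ, φ (!(z i)) i + δ ≤ φ (z i) i) (n : ℕ)
    (x : Sig) (k : ℤ) :
    ∑ i ∈ Finset.range n, φ (x i) (i + k) ≤
      ∑ i ∈ Finset.range n, φ (shiftZPow k z i) (i + k) -
        δ * hammingDist (initialWord n x) (initialWord n (shiftZPow k z)) := by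
  rw [hammingDist_initialWord, Nat.cast_sum, Finset.mul_sum, ← Finset.sum_sub_distrib]
  refine Finset.sum_le_sum fun i _ => ?_
  change φ (x i) (i + k) ≤ φ (z (i + k)) (i + k) - δ * (if x i ≠ z (i + k) then 1 else 0 : ℕ)
  by_cases h : x i = z (i + k)
  · simp [h]
  · rw [if_pos h, Bool.eq_not.2 h, Nat.cast_one, mul_one]
    linarith [hgap (i + k)]

lemma birk_le_iSup_birk_sub (hC : ∀ a i, |φ a i| ≤ C) (hδ : 0 ≤ δ)
    (hgap : ∀ i : ℤ, φ (!(z i)) i + δ ≤ φ (z i) i) (n : ℕ) (x : Sig) :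
    birk φ n x ≤ (⨆ y : Sig, birk φ n y) - δ * hammingDist (initialWord n x)
      (initialWord n (shiftZPow (nearestPower z (initialWord n x)) z)) := by
  refine ciSup_le fun k => ?_
  calc
    _ ≤ _ := sum_range_le_sum_shiftZPow_sub hgap n x k
    _ ≤ _ := by
      gcongr
      · exact (sum_range_le_birk hC n _ k).trans (birk_le_iSup_birk hC n _)
      · exact Function.argmin_le (fun k => hammingDist _ (initialWord n (shiftZPow k z))) k

end NearestPower

section Joining

open scoped Topology

variable {φ : Bool → ℤ → ℝ} {C δ : ℝ} {z : Sig} {μ ν : Measure Sig} {Z : Set Sig}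

/-- The event `x₀ ≠ y₀`, whose mass under joinings defines the `d̄`-metric. -/
def disagreement : Set (Sig × Sig) := {p | p.1 0 ≠ p.2 0}

lemma isClopen_disagreement : IsClopen disagreement :=
  (isClopen_discrete {q : Bool × Bool | q.1 ≠ q.2}).preimage
    (f := fun p : Sig × Sig => (p.1 0, p.2 0)) (by fun_prop)

lemma measurableSet_disagreement : MeasurableSet disagreement :=
  isClopen_disagreement.isOpen.measurableSet

lemma dbar_nonneg (μ ν : Measure Sig) : 0 ≤ dbar μ ν :=
  Real.sInf_nonneg fun _ ⟨_, _, _, _, _, hr⟩ => hr ▸ ENNReal.toReal_nonneg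

lemma dbar_le_measureReal_disagreement {m : Measure (Sig × Sig)} [IsProbabilityMeasure m]
    (hm : MeasurePreserving (Prod.map shift shift) m m) :
    dbar (m.map Prod.fst) (m.map Prod.snd) ≤ m.real disagreement :=
  csInf_le ⟨0, fun _ ⟨_, _, _, _, _, hr⟩ => hr ▸ ENNReal.toReal_nonneg⟩
    ⟨m, inferInstance, hm.map_eq, rfl, rfl, rfl⟩

lemma sInf_dbar_le [IsProbabilityMeasure ν] (hν : MeasurePreserving shift ν ν) (hνZ : ν Z = 1) :
    sInf {r : ℝ | ∃ ν : Measure Sig,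
      IsProbabilityMeasure ν ∧ ν.map shift = ν ∧ ν Z = 1 ∧ r = dbar μ ν} ≤ dbar μ ν :=
  csInf_le ⟨0, fun _ ⟨_, _, _, _, hr⟩ => hr ▸ dbar_nonneg _ _⟩
    ⟨ν, inferInstance, hν.map_eq, hνZ, rfl⟩

lemma continuous_shift : Continuous shift := by
  unfold shift
  fun_prop

lemma continuous_prodMap_shift : Continuous (Prod.map shift shift) :=
  continuous_shift.prodMap continuous_shift

lemma birkhoffSum_disagreement (n : ℕ) (p : Sig × Sig) :
    birkhoffSum (Prod.map shift shift) (disagreement.indicator (1 : Sig × Sig → ℝ)) n p =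
      hammingDist (initialWord n p.1) (initialWord n p.2) := by
  simp [birkhoffSum, hammingDist_initialWord, Prod.map_iterate, shift_iterate, shiftZPow,
    disagreement, Set.indicator_apply]

lemma measurable_prod_nearestPower (z : Sig) (n : ℕ) :
    Measurable fun x => (x, shiftZPow (nearestPower z (initialWord n x)) z) :=
  measurable_id.prodMk ((Measurable.of_discrete (f := fun w => shiftZPow (nearestPower z w) z)).comp
    (measurable_initialWord n))

/-- The law of `(x, σᵏ z)`, where `x` has law `μ` and `k` is chosen so that the initial words of
length `n` of `x` and `σᵏ z` are as close as possible. -/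
def nearestCoupling (z : Sig) (n : ℕ) (μ : Measure Sig) : Measure (Sig × Sig) :=
  μ.map fun x => (x, shiftZPow (nearestPower z (initialWord n x)) z)

instance (z : Sig) (n : ℕ) (μ : Measure Sig) [IsProbabilityMeasure μ] :
    IsProbabilityMeasure (nearestCoupling z n μ) :=
  Measure.isProbabilityMeasure_map (measurable_prod_nearestPower z n).aemeasurable

lemma map_fst_nearestCoupling (z : Sig) (n : ℕ) (μ : Measure Sig) :
    (nearestCoupling z n μ).map Prod.fst = μ :=
  (Measure.map_map measurable_fst (measurable_prod_nearestPower z n)).trans Measure.map_id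

lemma ae_snd_iterate_mem_nearestCoupling (hZ : MeasurableSet Z) (hz : ∀ k, shiftZPow k z ∈ Z)
    (n i : ℕ) (μ : Measure Sig) :
    ∀ᵐ p ∂nearestCoupling z n μ, (Prod.map shift shift)^[i] p ∈ Prod.snd ⁻¹' Z := by
  have hmeas := continuous_prodMap_shift.measurable.iterate i
  refine (ae_map_iff (measurable_prod_nearestPower z n).aemeasurable
    (hmeas (measurable_snd hZ))).2 (.of_forall fun x => ?_)
  simpa [Prod.map_iterate, shift_iterate, shiftZPow_shiftZPow] using hz _

/-- The average of `nearestCoupling z (n + 1) μ` over the first `n + 1` steps of the orbit of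
`σ × σ`. It becomes a joining in the weak limit `n → ∞`. -/
def empiricalCoupling (z : Sig) (μ : Measure Sig) [IsProbabilityMeasure μ] (n : ℕ) :
    ProbabilityMeasure (Sig × Sig) :=
  ⟨orbitAverage (Prod.map shift shift) (n + 1) (nearestCoupling z (n + 1) μ),
    isProbabilityMeasure_orbitAverage continuous_prodMap_shift.measurable n.succ_ne_zero⟩

variable [IsProbabilityMeasure μ]

lemma map_fst_empiricalCoupling (z : Sig) (hμ : MeasurePreserving shift μ μ) (n : ℕ) :
    (empiricalCoupling z μ n : Measure (Sig × Sig)).map Prod.fst = μ :=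
  calc
    _ = orbitAverage shift (n + 1) ((nearestCoupling z (n + 1) μ).map Prod.fst) :=
      map_orbitAverage continuous_prodMap_shift.measurable hμ.measurable measurable_fst
        fun _ => rfl
    _ = μ := by rw [map_fst_nearestCoupling, orbitAverage_eq_self hμ n.succ_ne_zero]

lemma ae_snd_mem_empiricalCoupling (hZ : MeasurableSet Z) (hz : ∀ k, shiftZPow k z ∈ Z) (n : ℕ) :
    ∀ᵐ p ∂(empiricalCoupling z μ n : Measure (Sig × Sig)), p ∈ Prod.snd ⁻¹' Z :=
  ae_mem_orbitAverage continuous_prodMap_shift.measurable (measurable_snd hZ) fun i =>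
    ae_snd_iterate_mem_nearestCoupling hZ hz (n + 1) i μ

lemma integral_hammingDist_nearestPower (z : Sig) (μ : Measure Sig) [IsProbabilityMeasure μ]
    (n : ℕ) :
    ∫ x, (hammingDist (initialWord (n + 1) x) (initialWord (n + 1)
      (shiftZPow (nearestPower z (initialWord (n + 1) x)) z)) : ℝ) ∂μ =
      (n + 1 : ℕ) * (empiricalCoupling z μ n : Measure (Sig × Sig)).real disagreement := by
  have hn : ((n + 1 : ℕ) : ℝ) ≠ 0 := Nat.cast_ne_zero.2 n.succ_ne_zero
  symm
  calc
    _ = ((n + 1 : ℕ) : ℝ) * ∫ p, birkhoffAverage ℝ (Prod.map shift shift) (disagreement.indicator 1)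
          (n + 1) p ∂nearestCoupling z (n + 1) μ := by
      rw [← measureReal_orbitAverage continuous_prodMap_shift.measurable
        measurableSet_disagreement]
      rfl
    _ = ∫ p, (hammingDist (initialWord (n + 1) p.1) (initialWord (n + 1) p.2) : ℝ)
          ∂nearestCoupling z (n + 1) μ := by
      simp only [birkhoffAverage, birkhoffSum_disagreement, smul_eq_mul, integral_const_mul,
        mul_inv_cancel_left₀ hn]
    _ = _ := integral_map (measurable_prod_nearestPower z (n + 1)).aemeasurable
      (measurable_hammingDist_initialWord (n + 1)).aestronglyMeasurable

lemma Lam_le_iSup_birk_div_sub (hC : ∀ a i, |φ a i| ≤ C) (hδ : 0 ≤ δ)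
    (hgap : ∀ i : ℤ, φ (!(z i)) i + δ ≤ φ (z i) i) (μ : Measure Sig) [IsProbabilityMeasure μ]
    (n : ℕ) :
    Lam φ μ ≤ (⨆ y : Sig, birk φ (n + 1) y) / (n + 1 : ℕ) -
      δ * (empiricalCoupling z μ n : Measure (Sig × Sig)).real disagreement := by
  let d (x : Sig) : ℝ := hammingDist (initialWord (n + 1) x)
    (initialWord (n + 1) (shiftZPow (nearestPower z (initialWord (n + 1) x)) z))
  have hd : Integrable d μ :=
    .of_bound ((measurable_hammingDist_initialWord (n + 1)).comp
      (measurable_prod_nearestPower z (n + 1))).aestronglyMeasurable (n + 1 : ℕ)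
      (.of_forall fun x => by
        rw [Real.norm_natCast, Nat.cast_le]
        exact hammingDist_le_card_fintype.trans_eq (Fintype.card_fin _))
  have hint : ∫ x, birk φ (n + 1) x ∂μ ≤ (⨆ y : Sig, birk φ (n + 1) y) - δ * ∫ x, d x ∂μ :=
    calc
      _ ≤ ∫ x, ((⨆ y : Sig, birk φ (n + 1) y) - δ * d x) ∂μ :=
        integral_mono (integrable_birk hC _ μ) ((integrable_const _).sub (hd.const_mul δ))
          (birk_le_iSup_birk_sub hC hδ hgap (n + 1))
      _ = _ := by
        rw [integral_sub (integrable_const _) (hd.const_mul δ), integral_const_mul]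
        simp
  calc
    _ ≤ (∫ x, birk φ (n + 1) x ∂μ) / (n + 1 : ℕ) := Lam_le_integral_birk_div hC μ n
    _ ≤ ((⨆ y : Sig, birk φ (n + 1) y) - δ * ∫ x, d x ∂μ) / (n + 1 : ℕ) := by gcongr
    _ = _ := by
      rw [integral_hammingDist_nearestPower]
      field_simp

lemma exists_joining_Lam_le (hZ : IsClosed Z) (hz : ∀ k, shiftZPow k z ∈ Z)
    (hC : ∀ a i, |φ a i| ≤ C) (hδ : 0 ≤ δ) (hgap : ∀ i : ℤ, φ (!(z i)) i + δ ≤ φ (z i) i)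
    (hμ : MeasurePreserving shift μ μ) :
    ∃ m : ProbabilityMeasure (Sig × Sig),
      MeasurePreserving (Prod.map shift shift) (m : Measure (Sig × Sig)) m ∧
      (m : Measure (Sig × Sig)).map Prod.fst = μ ∧
      (∀ᵐ p ∂(m : Measure (Sig × Sig)), p ∈ Prod.snd ⁻¹' Z) ∧
      Lam φ μ ≤ logSpr φ - δ * (m : Measure (Sig × Sig)).real disagreement := by
  obtain ⟨m, ψ, hψ, hm⟩ := CompactSpace.tendsto_subseq (empiricalCoupling z μ)
  have hN : Tendsto (fun k => ψ k + 1) atTop atTop :=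
    (tendsto_add_atTop_nat 1).comp hψ.tendsto_atTop
  have hlim := ((tendsto_iSup_birk_div hC).comp hN).sub
    ((tendsto_measureReal_of_isClopen isClopen_disagreement hm).const_mul δ)
  exact ⟨m, measurePreserving_of_tendsto_orbitAverage continuous_prodMap_shift hN
      (fun _ => rfl) hm,
    map_eq_of_tendsto continuous_fst hm fun k => map_fst_empiricalCoupling z hμ (ψ k),
    ae_mem_of_tendsto (hZ.preimage continuous_snd) hm fun k =>
      ae_snd_mem_empiricalCoupling hZ.measurableSet hz (ψ k),
    ge_of_tendsto' hlim fun k => Lam_le_iSup_birk_div_sub hC hδ hgap μ (ψ k)⟩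

end Joining

theorem Lam_le_logSpr_sub_dbar_general
    {Z : Set Sig} (hZ : IsClosed Z) {z : Sig} (hz : ∀ k : ℤ, shiftZPow k z ∈ Z)
    {φ : Bool → ℤ → ℝ} (hφ : ∃ C : ℝ, ∀ (a : Bool) (i : ℤ), |φ a i| ≤ C)
    {δ : ℝ} (hδ : 0 ≤ δ) (hgap : ∀ i : ℤ, φ (!(z i)) i + δ ≤ φ (z i) i)
    {μ : Measure Sig} [IsProbabilityMeasure μ] (hμ : MeasurePreserving shift μ μ) :
    Lam φ μ ≤ logSpr φ - δ * sInf {r : ℝ | ∃ ν : Measure Sig,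
      IsProbabilityMeasure ν ∧ ν.map shift = ν ∧ ν Z = 1 ∧ r = dbar μ ν} := by
  obtain ⟨C, hC⟩ := hφ
  obtain ⟨m, hm, hfst, hsnd, hLam⟩ := exists_joining_Lam_le hZ hz hC hδ hgap hμ
  let ν := (m : Measure (Sig × Sig)).map Prod.snd
  have : IsProbabilityMeasure ν := Measure.isProbabilityMeasure_map measurable_snd.aemeasurable
  have hν : MeasurePreserving shift ν ν :=
    .of_semiconj (measurable_snd.measurePreserving _) hm (fun _ => rfl) continuous_shift.measurable
  have hνZ : ν Z = 1 := (mem_ae_iff_prob_eq_one hZ.measurableSet).1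
    ((ae_map_iff measurable_snd.aemeasurable hZ.measurableSet).2 hsnd)
  calc Lam φ μ
    _ ≤ logSpr φ - δ * (m : Measure (Sig × Sig)).real disagreement := hLam
    _ ≤ logSpr φ - δ * dbar μ ν := by
      gcongr
      exact hfst ▸ dbar_le_measureReal_disagreement hm
    _ ≤ _ := by
      gcongr
      exact sInf_dbar_le hν hνZ

/-- Let `Z ⊆ Σ₂` be a nonempty compact shift-invariant set and `z ∈ Z` a point whose
(two-sided) shift-orbit is dense in `Z`.  If the bounded function `φ` and `δ > 0` satisfy
`φ (z i) i ≥ φ (1 - z i) i + δ` for every `i ∈ ℤ`, then for every ergodic shift-invariant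
probability measure `μ`,
`Λ(φ,μ) ≤ log ϱ(L₀^φ, L₁^φ) − δ · inf { d̄(μ,ν) : ν ∈ M_σ, ν Z = 1 }`. -/
theorem Lam_le_logSpr_sub_dbar
    (Z : Set Sig) (hZne : Z.Nonempty) (hZcpt : IsCompact Z) (hZinv : shift '' Z = Z)
    (z : Sig) (hz : z ∈ Z)
    (hdense : closure (Set.range fun n : ℤ => (fun j => z (j + n) : Sig)) = Z)
    (φ : Bool → ℤ → ℝ) (hφ : ∃ C : ℝ, ∀ (a : Bool) (i : ℤ), |φ a i| ≤ C)
    (δ : ℝ) (hδ : 0 < δ)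
    (hgap : ∀ i : ℤ, φ (!(z i)) i + δ ≤ φ (z i) i)
    (μ : Measure Sig) (hprob : IsProbabilityMeasure μ) (herg : Ergodic shift μ) :
    Lam φ μ ≤ logSpr φ - δ * sInf {r : ℝ | ∃ ν : Measure Sig,
      IsProbabilityMeasure ν ∧ ν.map shift = ν ∧ ν Z = 1 ∧ r = dbar μ ν} :=
  Lam_le_logSpr_sub_dbar_general hZcpt.isClosed
    (fun k => hdense ▸ subset_closure (Set.mem_range_self k)) hφ hδ.le hgap herg.toMeasurePreserving
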